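/- arXiv:2111.06147 — 5 statements merged into one kernel-verified Lean document; each statement's English description precedes it below -/
import Mathlib

section
/- Let Ψ : [0,∞) → ℝ be convex with Ψ(0) ≤ 0, let c > 0 and 0 < x₀ ≤ x₁, and suppose Ψ(x₁) > 0. Then ∫_{x₁}^∞ (1/x) · exp( - ∫_{x₀}^x (2Ψ(y))/(c y) dy ) dx < ∞. -/
open MeasureTheory Set

/-- A convex function on `[0,∞)` with nonpositive value at `0` grows at least linearly
past any point: the ratio `Ψ y / y` is monotone. -/
lemma ConvexOn.div_le_div_of_map_zero_nonpos {Ψ : ℝ → ℝ} (hconv : ConvexOn ℝ (Ici (0 : ℝ)) Ψ)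
    (h0 : Ψ 0 ≤ 0) {x y : ℝ} (hx : 0 < x) (hxy : x ≤ y) : Ψ x / x ≤ Ψ y / y := by
  have hy : 0 < y := hx.trans_le hxy
  have hle : x / y ≤ 1 := (div_le_one hy).2 hxy
  have h := hconv.2 (mem_Ici.2 hy.le) (mem_Ici.2 le_rfl) (div_nonneg hx.le hy.le)
    (sub_nonneg.2 hle) (by ring)
  simp only [smul_eq_mul, mul_zero, add_zero, div_mul_cancel₀ x hy.ne'] at h
  have h' : (1 - x / y) * Ψ 0 ≤ 0 := mul_nonpos_of_nonneg_of_nonpos (sub_nonneg.2 hle) h0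
  rw [div_le_iff₀ hx]
  calc Ψ x ≤ x / y * Ψ y := by linarith
    _ = Ψ y / y * x := by ring

/-- If `Ψ` is convex and continuous on `[0,∞)` with `Ψ(0) ≤ 0`, `c > 0`,
`0 < x₀ ≤ x₁` and `Ψ(x₁) > 0`, then
`∫_{x₁}^∞ (1/x) exp(-∫_{x₀}^x 2Ψ(y)/(cy) dy) dx < ∞`. -/
theorem stmt_3 (Ψ : ℝ → ℝ) (hconv : ConvexOn ℝ (Set.Ici (0 : ℝ)) Ψ)
    (hcont : ContinuousOn Ψ (Set.Ici (0 : ℝ))) (h0 : Ψ 0 ≤ 0)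
    (c x₀ x₁ : ℝ) (hc : 0 < c) (hx₀ : 0 < x₀) (hx₀₁ : x₀ ≤ x₁) (hΨx₁ : 0 < Ψ x₁) :
    IntegrableOn
      (fun x => 1 / x * Real.exp (-(∫ y in x₀..x, 2 * Ψ y / (c * y))))
      (Set.Ioi x₁) := by
  have hx₁ : 0 < x₁ := hx₀.trans_le hx₀₁
  set f : ℝ → ℝ := fun y => 2 * Ψ y / (c * y) with hf
  have hfc : ContinuousOn f (Ioi 0) :=
    (continuousOn_const.mul (hcont.mono Ioi_subset_Ici_self)).div
      (continuousOn_const.mul continuousOn_id) fun y hy => (mul_pos hc hy).ne'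
  have hint : ∀ a b, 0 < a → 0 < b → IntervalIntegrable f volume a b := fun a b ha hb =>
    (hfc.mono fun y hy => (lt_min ha hb).trans_le hy.1).intervalIntegrable
  have hFc : ContinuousOn (fun x => ∫ y in x₀..x, f y) (Ioi x₁) := fun x hx => by
    have hx' : 0 < x := hx₁.trans hx
    exact (intervalIntegral.integral_hasDerivAt_right (hint x₀ x hx₀ hx')
      (hfc.stronglyMeasurableAtFilter isOpen_Ioi x hx')
      (hfc.continuousAt (Ioi_mem_nhds hx'))).continuousAt.continuousWithinAt
  set k : ℝ := f x₁ with hk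
  have hkpos : 0 < k := div_pos (mul_pos two_pos hΨx₁) (mul_pos hc hx₁)
  have hkle : ∀ y, x₁ ≤ y → k ≤ f y := fun y hy => by
    have h := hconv.div_le_div_of_map_zero_nonpos h0 hx₁ hy
    have h2 := mul_le_mul_of_nonneg_left h (div_nonneg zero_le_two hc.le)
    simpa only [hk, hf, div_mul_div_comm] using h2
  have hlow : ∀ x, x₁ < x → (∫ y in x₀..x₁, f y) + k * (x - x₁) ≤ ∫ y in x₀..x, f y := by
    intro x hx
    rw [← intervalIntegral.integral_add_adjacent_intervals (hint x₀ x₁ hx₀ hx₁)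
      (hint x₁ x hx₁ (hx₁.trans hx))]
    have h := intervalIntegral.integral_mono_on hx.le (intervalIntegrable_const (c := k))
      (hint x₁ x hx₁ (hx₁.trans hx)) fun y hy => hkle y hy.1
    rw [intervalIntegral.integral_const, smul_eq_mul] at h
    linarith
  refine Integrable.mono' ((exp_neg_integrableOn_Ioi x₁ hkpos).const_mul
    (1 / x₁ * Real.exp (-(∫ y in x₀..x₁, f y) + k * x₁))) ?_ ?_
  · refine ContinuousOn.aestronglyMeasurable (ContinuousOn.mul ?_ hFc.neg.rexp) measurableSet_Ioi
    exact continuousOn_const.div continuousOn_id fun x hx => (hx₁.trans hx).ne'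
  · filter_upwards [ae_restrict_mem measurableSet_Ioi] with x hx
    have hx' : 0 < x := hx₁.trans hx
    rw [Real.norm_of_nonneg (by positivity), mul_assoc, ← Real.exp_add]
    gcongr
    · exact (mem_Ioi.1 hx).le
    · linarith [hlow x hx]
end

section
/- Let ρ ∈ [0,∞) and let Ψ be continuous and strictly positive on (ρ,∞). Assume T(y) := ∫_y^∞ du/Ψ(u) < ∞ for every y > ρ (Grey's condition) and lim_{y→ρ⁺} T(y) = ∞. Then for all z > 0 and θ > 0: ∫_ρ^∞ θ e^{-yz - θ T(y)} dy/Ψ(y) = ∫_ρ^∞ z e^{-yz - θ T(y)} dy, and both integrals are finite. -/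
open MeasureTheory Set Filter

open scoped Topology

/-- The tail integral of a function continuous and integrable on right half-lines has derivative
minus the integrand. -/
lemma hasDerivAt_integral_Ioi {f : ℝ → ℝ} {ρ x : ℝ} (hf : ContinuousOn f (Ioi ρ))
    (hint : ∀ y ∈ Ioi ρ, IntegrableOn f (Ioi y)) (hx : ρ < x) :
    HasDerivAt (fun y => ∫ u in Ioi y, f u) (-f x) x := by
  obtain ⟨c, hρc, hcx⟩ := exists_between hx
  have hsplit : (fun y => ∫ u in Ioi y, f u) =ᶠ[𝓝 x]
      fun y => (∫ u in Ioi c, f u) - ∫ u in c..y, f u := by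
    filter_upwards [Ioi_mem_nhds hcx] with y hy
    rw [← intervalIntegral.integral_Ioi_sub_Ioi (hint c hρc) (le_of_lt hy), sub_sub_cancel]
  have hprim : HasDerivAt (fun y => ∫ u in c..y, f u) (f x) x := by
    refine intervalIntegral.integral_hasDerivAt_right ?_ ?_ (hf.continuousAt (Ioi_mem_nhds hx))
    · rw [intervalIntegrable_iff_integrableOn_Ioc_of_le hcx.le]
      exact (hint c hρc).mono_set Ioc_subset_Ioi_self
    · exact hf.stronglyMeasurableAtFilter isOpen_Ioi x hx
  exact (hprim.const_sub _).congr_of_eventuallyEq hsplit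

/-- The tail integral of an integrable function vanishes at infinity. -/
lemma tendsto_integral_Ioi_atTop_zero {f : ℝ → ℝ} {c : ℝ} (hf : IntegrableOn f (Ioi c)) :
    Tendsto (fun y => ∫ u in Ioi y, f u) atTop (𝓝 0) := by
  have h := (intervalIntegral_tendsto_integral_Ioi c hf tendsto_id).const_sub (∫ u in Ioi c, f u)
  rw [sub_self] at h
  refine h.congr' ?_
  filter_upwards [Ioi_mem_atTop c] with y hy
  rw [id, ← intervalIntegral.integral_Ioi_sub_Ioi hf (le_of_lt hy), sub_sub_cancel]

/-- A nonnegative derivative of a function with finite limits at both ends of `(a, ∞)` is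
integrable there. -/
lemma integrableOn_Ioi_deriv_of_nonneg_of_tendsto {g g' : ℝ → ℝ} {a k l : ℝ}
    (hderiv : ∀ x ∈ Ioi a, HasDerivAt g (g' x) x) (hnonneg : ∀ x ∈ Ioi a, 0 ≤ g' x)
    (ha : Tendsto g (𝓝[>] a) (𝓝 k)) (hl : Tendsto g atTop (𝓝 l)) :
    IntegrableOn g' (Ioi a) := by
  have hcongr : ∀ x ∈ Ioi a, Function.update g a k x = g x :=
    fun x hx => Function.update_of_ne (ne_of_gt hx) _ _
  refine integrableOn_Ioi_deriv_of_nonneg (g := Function.update g a k) (l := l) ?_ ?_ hnonneg ?_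
  · rw [continuousWithinAt_update_same, Ici_sdiff_left]
    exact ha
  · intro x hx
    refine (hderiv x hx).congr_of_eventuallyEq ?_
    filter_upwards [Ioi_mem_nhds hx] with y hy using hcongr y hy
  · refine hl.congr' ?_
    filter_upwards [Ioi_mem_atTop a] with y hy using (hcongr y hy).symm

/-- Integration by parts for the Laplace transform of the extinction time of a
CSBP: if `Ψ` is continuous and strictly positive on `(ρ,∞)`, `T(y) = ∫_y^∞ du/Ψ(u)`
is finite for every `y > ρ` (Grey's condition) and `T(y) → ∞` as `y → ρ⁺`, then
for all `z, θ > 0` the integrals `∫_ρ^∞ θ e^{-yz - θT(y)} dy/Ψ(y)` and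
`∫_ρ^∞ z e^{-yz - θT(y)} dy` are finite and equal. -/
theorem stmt_11 (ρ : ℝ) (hρ : 0 ≤ ρ) (Ψ : ℝ → ℝ)
    (hcont : ContinuousOn Ψ (Set.Ioi ρ))
    (hpos : ∀ u ∈ Set.Ioi ρ, 0 < Ψ u)
    (hint : ∀ y ∈ Set.Ioi ρ, IntegrableOn (fun u => (Ψ u)⁻¹) (Set.Ioi y))
    (T : ℝ → ℝ)
    (hT : ∀ y ∈ Set.Ioi ρ, T y = ∫ u in Set.Ioi y, (Ψ u)⁻¹)
    (hTlim : Filter.Tendsto T (nhdsWithin ρ (Set.Ioi ρ)) Filter.atTop)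
    (z θ : ℝ) (hz : 0 < z) (hθ : 0 < θ) :
    IntegrableOn (fun y => θ * Real.exp (-y * z - θ * T y) / Ψ y) (Set.Ioi ρ)
    ∧ IntegrableOn (fun y => z * Real.exp (-y * z - θ * T y)) (Set.Ioi ρ)
    ∧ ∫ y in Set.Ioi ρ, θ * Real.exp (-y * z - θ * T y) / Ψ y
      = ∫ y in Set.Ioi ρ, z * Real.exp (-y * z - θ * T y) := by
  have hTderiv : ∀ x ∈ Ioi ρ, HasDerivAt T (-(Ψ x)⁻¹) x := by
    intro x hx
    refine (hasDerivAt_integral_Ioi (hcont.inv₀ fun u hu => (hpos u hu).ne') hint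
      hx).congr_of_eventuallyEq ?_
    filter_upwards [Ioi_mem_nhds hx] with y hy using hT y hy
  have hTnonneg : ∀ x ∈ Ioi ρ, 0 ≤ T x := by
    intro x hx
    rw [hT x hx]
    exact setIntegral_nonneg measurableSet_Ioi fun u hu =>
      (inv_pos.2 (hpos u (Ioi_subset_Ioi (le_of_lt hx) hu))).le
  have hTtop : Tendsto T atTop (𝓝 0) := by
    refine (tendsto_integral_Ioi_atTop_zero (hint (ρ + 1) (lt_add_one ρ))).congr' ?_
    filter_upwards [Ioi_mem_atTop ρ] with y hy using (hT y hy).symm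
  set u : ℝ → ℝ := fun y => Real.exp (-y * z) with hu_def
  set v : ℝ → ℝ := fun y => Real.exp (-(θ * T y))
  have hexp : ∀ y, Real.exp (-y * z - θ * T y) = u y * v y := by
    intro y
    rw [sub_eq_add_neg, Real.exp_add]
  have hu : ∀ x ∈ Ioi ρ, HasDerivAt u (-z * u x) x := by
    intro x _
    have h : HasDerivAt u (u x * (-1 * z)) x := ((hasDerivAt_id x).neg.mul_const z).exp
    exact h.congr_deriv (by ring)
  have hv : ∀ x ∈ Ioi ρ, HasDerivAt v (θ * v x / Ψ x) x := by
    intro x hx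
    have h : HasDerivAt v (v x * -(θ * -(Ψ x)⁻¹)) x := ((hTderiv x hx).const_mul θ).neg.exp
    exact h.congr_deriv (by ring)
  have hv_pos : ∀ x, 0 < v x := fun x => Real.exp_pos _
  have hu_le : ∀ x ∈ Ioi ρ, ‖u x‖ ≤ 1 := by
    intro x hx
    rw [Real.norm_of_nonneg (Real.exp_pos _).le, Real.exp_le_one_iff]
    have : 0 < x := hρ.trans_lt hx
    nlinarith
  have hv_le : ∀ x ∈ Ioi ρ, ‖v x‖ ≤ 1 := by
    intro x hx
    rw [Real.norm_of_nonneg (hv_pos x).le, Real.exp_le_one_iff]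
    exact neg_nonpos.2 (mul_nonneg hθ.le (hTnonneg x hx))
  have hu_cont : Continuous u := by fun_prop
  have hv_cont : ContinuousOn v (Ioi ρ) :=
    fun x hx => (hv x hx).continuousAt.continuousWithinAt
  have hv_zero : Tendsto v (𝓝[>] ρ) (𝓝 0) :=
    Real.tendsto_exp_neg_atTop_nhds_zero.comp (hTlim.const_mul_atTop hθ)
  have hv_top : Tendsto v atTop (𝓝 1) := by
    have h := (Real.continuous_exp.tendsto _).comp (hTtop.const_mul θ).neg
    rwa [mul_zero, neg_zero, Real.exp_zero] at h
  have hu_top : Tendsto u atTop (𝓝 0) := by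
    refine (Real.tendsto_exp_neg_atTop_nhds_zero.comp
      (tendsto_id.atTop_mul_const hz)).congr fun y => ?_
    simp [hu_def]
  have hu_int : IntegrableOn u (Ioi ρ) := by
    refine (exp_neg_integrableOn_Ioi ρ hz).congr_fun (fun y _ => ?_) measurableSet_Ioi
    simp [hu_def, mul_comm]
  have hv'_int : IntegrableOn (fun x => θ * v x / Ψ x) (Ioi ρ) :=
    integrableOn_Ioi_deriv_of_nonneg_of_tendsto hv
      (fun x hx => div_nonneg (mul_nonneg hθ.le (hv_pos x).le) (hpos x hx).le) hv_zero hv_top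
  have huv' : IntegrableOn (u * fun x => θ * v x / Ψ x) (Ioi ρ) :=
    hv'_int.bdd_mul hu_cont.aestronglyMeasurable
      ((ae_restrict_iff' measurableSet_Ioi).2 (ae_of_all _ hu_le))
  have huv : IntegrableOn (fun x => u x * v x) (Ioi ρ) :=
    hu_int.mul_bdd (hv_cont.aestronglyMeasurable measurableSet_Ioi)
      ((ae_restrict_iff' measurableSet_Ioi).2 (ae_of_all _ hv_le))
  have hu'v : IntegrableOn ((fun x => -z * u x) * v) (Ioi ρ) := by
    simpa only [IntegrableOn, Pi.mul_def, mul_assoc] using huv.const_mul (-z)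
  have huv_zero : Tendsto (u * v) (𝓝[>] ρ) (𝓝 0) := by
    simpa [Pi.mul_def] using (hu_cont.continuousWithinAt (s := Ioi ρ) (x := ρ)).tendsto.mul hv_zero
  have huv_top : Tendsto (u * v) atTop (𝓝 0) := by
    simpa [Pi.mul_def] using hu_top.mul hv_top
  have hparts := integral_Ioi_mul_deriv_eq_deriv_mul hu hv huv' hu'v huv_zero huv_top
  have hleft : ∀ y, θ * Real.exp (-y * z - θ * T y) / Ψ y = u y * (θ * v y / Ψ y) := by
    intro y
    rw [hexp]
    ring
  simp only [hleft]
  simp only [hexp]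
  refine ⟨huv', huv.const_mul z, ?_⟩
  rw [hparts, sub_self, zero_sub, ← integral_neg]
  refine integral_congr_ae (ae_of_all _ fun x => ?_)
  ring
end

section
/- Let ρ ∈ (0,∞] and let Ψ be continuous and strictly negative on (0,ρ). Assume D(y) := ∫_0^y du/(-Ψ(u)) < ∞ for every y ∈ (0,ρ) (Dynkin's condition) and lim_{y→ρ⁻} D(y) = ∞. Then for all z > 0 and θ > 0: ∫_0^ρ θ (1 - e^{-yz}) e^{-θ D(y)} dy/(-Ψ(y)) = ∫_0^ρ z e^{-yz - θ D(y)} dy, and both integrals are finite. -/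
open MeasureTheory Set Filter

/-- Integration by parts of `(1 - e^{-yz}) e^{-θ ∫₀^y g}` on a bounded interval. -/
lemma integrableOn_and_integral_sub_integral_eq {g : ℝ → ℝ} {b : ℝ} (z θ : ℝ) (hb : 0 ≤ b)
    (hg : IntegrableOn g (Ioo 0 b)) (hc : ContinuousOn g (Ioo 0 b)) :
    IntegrableOn (fun y => θ * (1 - Real.exp (-y * z)) *
        Real.exp (-θ * ∫ u in (0 : ℝ)..y, g u) * g y) (Ioc 0 b) ∧
    IntegrableOn (fun y => z * Real.exp (-y * z - θ * ∫ u in (0 : ℝ)..y, g u)) (Ioc 0 b) ∧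
    (∫ y in Ioc 0 b, z * Real.exp (-y * z - θ * ∫ u in (0 : ℝ)..y, g u)) -
      ∫ y in Ioc 0 b, θ * (1 - Real.exp (-y * z)) *
        Real.exp (-θ * ∫ u in (0 : ℝ)..y, g u) * g y =
      (1 - Real.exp (-b * z)) * Real.exp (-θ * ∫ u in (0 : ℝ)..b, g u) := by
  have hgi : IntervalIntegrable g volume 0 b := by
    rwa [intervalIntegrable_iff_integrableOn_Ioo_of_le hb]
  have hE : ContinuousOn (fun y => ∫ u in (0 : ℝ)..y, g u) (Icc 0 b) := by
    rw [← uIcc_of_le hb]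
    exact intervalIntegral.continuousOn_primitive_interval' hgi left_mem_uIcc
  have hd : ∀ y ∈ Ioo 0 b, HasDerivAt (fun y => ∫ u in (0 : ℝ)..y, g u) (g y) y := by
    intro y hy
    refine intervalIntegral.integral_hasDerivAt_right
      (hgi.mono_set ?_) ?_ (hc.continuousAt (isOpen_Ioo.mem_nhds hy))
    · rw [uIcc_of_le hb, uIcc_of_le hy.1.le]
      exact Icc_subset_Icc_right hy.2.le
    · exact hc.stronglyMeasurableAtFilter isOpen_Ioo y hy
  have h₁ : IntervalIntegrable (fun y => θ * (1 - Real.exp (-y * z)) *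
      Real.exp (-θ * ∫ u in (0 : ℝ)..y, g u) * g y) volume 0 b := by
    refine hgi.continuousOn_mul ?_
    rw [uIcc_of_le hb]
    fun_prop
  have h₂ : IntervalIntegrable
      (fun y => z * Real.exp (-y * z - θ * ∫ u in (0 : ℝ)..y, g u)) volume 0 b := by
    refine ContinuousOn.intervalIntegrable ?_
    rw [uIcc_of_le hb]
    fun_prop
  refine ⟨(intervalIntegrable_iff_integrableOn_Ioc_of_le hb).mp h₁,
    (intervalIntegrable_iff_integrableOn_Ioc_of_le hb).mp h₂, ?_⟩
  rw [← intervalIntegral.integral_of_le hb, ← intervalIntegral.integral_of_le hb,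
    ← intervalIntegral.integral_sub h₂ h₁]
  rw [intervalIntegral.integral_eq_sub_of_hasDerivAt_of_le hb
    (f := fun y => (1 - Real.exp (-y * z)) * Real.exp (-θ * ∫ u in (0 : ℝ)..y, g u))
    (by fun_prop) ?_ (h₂.sub h₁)]
  · simp
  · intro y hy
    have hexp : HasDerivAt (fun y => 1 - Real.exp (-y * z)) (z * Real.exp (-y * z)) y := by
      refine ((hasDerivAt_neg y).mul_const z).exp.const_sub 1 |>.congr_deriv ?_
      ring
    refine hexp.mul (((hd y hy).const_mul (-θ)).exp) |>.congr_deriv ?_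
    rw [sub_eq_add_neg (-y * z), Real.exp_add, ← neg_mul]
    ring

/-- Integration by parts for the Laplace transform of the explosion time of a
CSBP: if `Ψ` is continuous and strictly negative on `(0,ρ)` (`ρ ∈ (0,∞]`),
`D(y) = ∫_0^y du/(-Ψ(u))` is finite for every `y ∈ (0,ρ)` (Dynkin's condition)
and `D(y) → ∞` as `y → ρ⁻`, then for all `z, θ > 0` the integrals
`∫_0^ρ θ (1-e^{-yz}) e^{-θD(y)} dy/(-Ψ(y))` and `∫_0^ρ z e^{-yz - θD(y)} dy`
are finite and equal. -/
theorem stmt_12 (ρ : EReal) (hρ : 0 < ρ) (Ψ : ℝ → ℝ)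
    (hcont : ContinuousOn Ψ {y : ℝ | 0 < y ∧ (y : EReal) < ρ})
    (hneg : ∀ y : ℝ, 0 < y → (y : EReal) < ρ → Ψ y < 0)
    (hint : ∀ y : ℝ, 0 < y → (y : EReal) < ρ →
      IntegrableOn (fun u => (-Ψ u)⁻¹) (Set.Ioo 0 y))
    (D : ℝ → ℝ)
    (hD : ∀ y : ℝ, 0 < y → (y : EReal) < ρ →
      D y = ∫ u in Set.Ioo (0 : ℝ) y, (-Ψ u)⁻¹)
    (hDlim : ∀ M : ℝ, ∃ y : ℝ, 0 < y ∧ (y : EReal) < ρ ∧ M ≤ D y)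
    (z θ : ℝ) (hz : 0 < z) (hθ : 0 < θ) :
    IntegrableOn
      (fun y => θ * (1 - Real.exp (-y * z)) * Real.exp (-θ * D y) / (-Ψ y))
      {y : ℝ | 0 < y ∧ (y : EReal) < ρ}
    ∧ IntegrableOn (fun y => z * Real.exp (-y * z - θ * D y))
        {y : ℝ | 0 < y ∧ (y : EReal) < ρ}
    ∧ ∫ y in {y : ℝ | 0 < y ∧ (y : EReal) < ρ},
          θ * (1 - Real.exp (-y * z)) * Real.exp (-θ * D y) / (-Ψ y)
      = ∫ y in {y : ℝ | 0 < y ∧ (y : EReal) < ρ},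
          z * Real.exp (-y * z - θ * D y) := by
  set S : Set ℝ := {y : ℝ | 0 < y ∧ (y : EReal) < ρ}
  have hSm : MeasurableSet S := by measurability
  have hsub : ∀ b ∈ S, Ioc 0 b ⊆ S := fun b hb y hy =>
    ⟨hy.1, (EReal.coe_le_coe_iff.mpr hy.2).trans_lt hb.2⟩
  have hgpos : ∀ y ∈ S, 0 < (-Ψ y)⁻¹ := fun y hy => by
    have := hneg y hy.1 hy.2
    exact inv_pos.mpr (by linarith)
  have hgc : ContinuousOn (fun y => (-Ψ y)⁻¹) S :=
    hcont.neg.inv₀ fun y hy => (neg_pos.mpr (hneg y hy.1 hy.2)).ne'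
  have hDE : ∀ y ∈ S, D y = ∫ u in (0 : ℝ)..y, (-Ψ u)⁻¹ := fun y hy => by
    rw [hD y hy.1 hy.2, intervalIntegral.integral_of_le hy.1.le, integral_Ioc_eq_integral_Ioo]
  have hDnonneg : ∀ y ∈ S, 0 ≤ D y := fun y hy => by
    rw [hD y hy.1 hy.2]
    exact setIntegral_nonneg measurableSet_Ioo fun u hu =>
      (hgpos u (hsub y hy (Ioo_subset_Ioc_self hu))).le
  have hDmono : ∀ x ∈ S, ∀ y ∈ S, x ≤ y → D x ≤ D y := fun x hx y hy hxy => by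
    rw [hD x hx.1 hx.2, hD y hy.1 hy.2]
    refine setIntegral_mono_set (hint y hy.1 hy.2) ?_ (Ioo_subset_Ioo_right hxy).eventuallyLE
    filter_upwards [ae_restrict_mem measurableSet_Ioo] with u hu
    exact (hgpos u (hsub y hy (Ioo_subset_Ioc_self hu))).le
  choose b hb₀ hbρ hbD using fun n : ℕ => hDlim n
  have hbS : ∀ n, b n ∈ S := fun n => ⟨hb₀ n, hbρ n⟩
  have hDb : Tendsto (fun n => D (b n)) atTop atTop :=
    tendsto_atTop_mono hbD tendsto_natCast_atTop_atTop
  have hcover : AECover (volume.restrict S) atTop fun n => Ioc 0 (b n) := by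
    refine ⟨?_, fun n => measurableSet_Ioc⟩
    filter_upwards [ae_restrict_mem hSm] with y hy
    filter_upwards [hDb.eventually_gt_atTop (D y)] with n hn
    refine ⟨hy.1, ?_⟩
    by_contra! h
    exact absurd (hDmono _ (hbS n) y hy h.le) (not_le.mpr hn)
  have hrestrict : ∀ n, (volume.restrict S).restrict (Ioc 0 (b n)) =
      volume.restrict (Ioc 0 (b n)) := fun n =>
    Measure.restrict_restrict_of_subset (hsub _ (hbS n))
  set f₁ : ℝ → ℝ := fun y => θ * (1 - Real.exp (-y * z)) * Real.exp (-θ * D y) / (-Ψ y) with hf₁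
  set f₂ : ℝ → ℝ := fun y => z * Real.exp (-y * z - θ * D y) with hf₂
  have hparts : ∀ n, IntegrableOn f₁ (Ioc 0 (b n)) ∧ IntegrableOn f₂ (Ioc 0 (b n)) ∧
      (∫ y in Ioc 0 (b n), f₂ y) - ∫ y in Ioc 0 (b n), f₁ y =
        (1 - Real.exp (-b n * z)) * Real.exp (-θ * D (b n)) := by
    intro n
    have h := integrableOn_and_integral_sub_integral_eq z θ (hb₀ n).le (hint _ (hb₀ n) (hbρ n))
      (hgc.mono (Ioo_subset_Ioc_self.trans (hsub _ (hbS n))))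
    have e₁ : EqOn f₁ (fun y => θ * (1 - Real.exp (-y * z)) *
        Real.exp (-θ * ∫ u in (0 : ℝ)..y, (-Ψ u)⁻¹) * (-Ψ y)⁻¹) (Ioc 0 (b n)) := fun y hy => by
      simp only [hf₁, hDE y (hsub _ (hbS n) hy), div_eq_mul_inv]
    have e₂ : EqOn f₂ (fun y => z * Real.exp (-y * z - θ * ∫ u in (0 : ℝ)..y, (-Ψ u)⁻¹))
        (Ioc 0 (b n)) := fun y hy => by
      simp only [hf₂, hDE y (hsub _ (hbS n) hy)]
    rwa [integrableOn_congr_fun e₁ measurableSet_Ioc, integrableOn_congr_fun e₂ measurableSet_Ioc,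
      setIntegral_congr_fun measurableSet_Ioc e₁, setIntegral_congr_fun measurableSet_Ioc e₂,
      hDE _ (hbS n)]
  have hi₂ : IntegrableOn f₂ S := by
    have hdom : IntegrableOn (fun y => z * Real.exp (-z * y)) S :=
      ((integrableOn_exp_mul_Ioi (neg_lt_zero.mpr hz) 0).mono_set fun y hy => hy.1).const_mul z
    refine Integrable.mono' hdom (hcover.aestronglyMeasurable fun n => ?_) ?_
    · rw [hrestrict]
      exact (hparts n).2.1.aestronglyMeasurable
    · filter_upwards [ae_restrict_mem hSm] with y hy
      rw [Real.norm_of_nonneg (by positivity)]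
      have := mul_nonneg hθ.le (hDnonneg y hy)
      exact mul_le_mul_of_nonneg_left (Real.exp_le_exp.mpr (by linarith)) hz.le
  have hlim₂ : Tendsto (fun n => ∫ y in Ioc 0 (b n), f₂ y) atTop (nhds (∫ y in S, f₂ y)) := by
    simpa only [hrestrict] using hcover.integral_tendsto_of_countably_generated hi₂
  have hboundary : Tendsto (fun n => (1 - Real.exp (-b n * z)) * Real.exp (-θ * D (b n)))
      atTop (nhds 0) := by
    have hexp : Tendsto (fun n => Real.exp (-θ * D (b n))) atTop (nhds 0) :=
      Real.tendsto_exp_atBot.comp (hDb.const_mul_atTop_of_neg (neg_lt_zero.mpr hθ))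
    refine squeeze_zero (fun n => ?_) (fun n => ?_) hexp
    · have : Real.exp (-b n * z) ≤ 1 := Real.exp_le_one_iff.mpr (by nlinarith [hb₀ n])
      exact mul_nonneg (by linarith) (Real.exp_pos _).le
    · exact mul_le_of_le_one_left (Real.exp_pos _).le (by linarith [Real.exp_pos (-b n * z)])
  have hlim₁ : Tendsto (fun n => ∫ y in Ioc 0 (b n), f₁ y ∂volume.restrict S) atTop
      (nhds (∫ y in S, f₂ y)) := by
    have h := hlim₂.sub hboundary
    rw [sub_zero] at h
    refine h.congr fun n => ?_
    rw [hrestrict, ← (hparts n).2.2, sub_sub_cancel]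
  have hnonneg : 0 ≤ᵐ[volume.restrict S] f₁ := by
    filter_upwards [ae_restrict_mem hSm] with y hy
    have : Real.exp (-y * z) ≤ 1 := Real.exp_le_one_iff.mpr (by nlinarith [hy.1])
    have hΨ := hneg y hy.1 hy.2
    exact div_nonneg (mul_nonneg (mul_nonneg hθ.le (by linarith)) (Real.exp_pos _).le)
      (by linarith)
  have hi₁ : IntegrableOn f₁ S :=
    hcover.integrable_of_integral_tendsto_of_nonneg_ae _
      (fun n => by rw [IntegrableOn, hrestrict]; exact (hparts n).1) hnonneg hlim₁
  exact ⟨hi₁, hi₂, tendsto_nhds_unique (hcover.integral_tendsto_of_countably_generated hi₁) hlim₁⟩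
end

section
/- Let σ² : (0,∞) → (0,∞) be continuously differentiable and μ : (0,∞) → ℝ continuous, and fix x₀ > 0. Define the scale density s_U(x) := exp( - ∫_{x₀}^x (2μ(u))/(σ²(u)) du ), the dual drift μ^V(y) := (1/2)(σ²)'(y) - μ(y), and the dual scale density s_V(v) := exp( - ∫_{x₀}^v (2μ^V(u))/(σ²(u)) du ). Then for every v > 0: s_V(v) = σ²(x₀) / ( σ²(v) s_U(v) ). Consequently, with the speed densities m_U(x) := 1/(σ²(x) s_U(x)) and m_V(x) := 1/(σ²(x) s_V(x)), one has m_V(x) = s_U(x)/σ²(x₀) and m_U(x) = s_V(x)/σ²(x₀) for all x > 0. -/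
open Set

/-- Siegmund duality exchanges scale and speed densities: with
`s_U(x) = exp(-∫_{x₀}^x 2μ/σ²)`, dual drift `μ^V = (1/2)(σ²)' - μ`,
`s_V(v) = exp(-∫_{x₀}^v 2μ^V/σ²)`, `m_U = 1/(σ² s_U)` and `m_V = 1/(σ² s_V)`,
one has `s_V(v) = σ²(x₀)/(σ²(v) s_U(v))`, `m_V(v) = s_U(v)/σ²(x₀)` and
`m_U(v) = s_V(v)/σ²(x₀)` for every `v > 0`. -/
theorem stmt_15 (sq μ : ℝ → ℝ)
    (hsqpos : ∀ x : ℝ, 0 < x → 0 < sq x)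
    (hsqC1 : ContDiffOn ℝ 1 sq (Set.Ioi (0 : ℝ)))
    (hμ : ContinuousOn μ (Set.Ioi (0 : ℝ)))
    (x₀ : ℝ) (hx₀ : 0 < x₀)
    (sU sV mU mV : ℝ → ℝ)
    (hsU : ∀ x : ℝ, sU x = Real.exp (-(∫ u in x₀..x, 2 * μ u / sq u)))
    (hsV : ∀ v : ℝ, sV v =
      Real.exp (-(∫ u in x₀..v, 2 * (1 / 2 * deriv sq u - μ u) / sq u)))
    (hmU : ∀ x : ℝ, mU x = 1 / (sq x * sU x))
    (hmV : ∀ x : ℝ, mV x = 1 / (sq x * sV x)) :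
    ∀ v : ℝ, 0 < v →
      sV v = sq x₀ / (sq v * sU v)
      ∧ mV v = sU v / sq x₀
      ∧ mU v = sV v / sq x₀ := by
  intro v hv
  have hsub : uIcc x₀ v ⊆ Ioi (0 : ℝ) := (convex_Ioi 0).ordConnected.uIcc_subset hx₀ hv
  have hsV' : sV v = sq x₀ / (sq v * sU v) := by
    have hderiv : ContinuousOn (deriv sq) (uIcc x₀ v) :=
      (hsqC1.continuousOn_deriv_of_isOpen isOpen_Ioi le_rfl).mono hsub
    have hsq : ContinuousOn sq (uIcc x₀ v) := hsqC1.continuousOn.mono hsub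
    have hne : ∀ u ∈ uIcc x₀ v, sq u ≠ 0 := fun u hu => (hsqpos u (hsub hu)).ne'
    have hdrift : IntervalIntegrable (fun u => 2 * μ u / sq u) MeasureTheory.volume x₀ v :=
      ((continuousOn_const.mul (hμ.mono hsub)).div hsq hne).intervalIntegrable
    have hlogDeriv : IntervalIntegrable (fun u => deriv sq u / sq u)
        MeasureTheory.volume x₀ v := (hderiv.div hsq hne).intervalIntegrable
    have hlog : ∫ u in x₀..v, deriv sq u / sq u = Real.log (sq v) - Real.log (sq x₀) := by
      refine intervalIntegral.integral_eq_sub_of_hasDerivAt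
        (f := fun u => Real.log (sq u)) (fun u hu => ?_) hlogDeriv
      have hdiff : DifferentiableAt ℝ sq u :=
        (hsqC1.differentiableOn one_ne_zero).differentiableAt (isOpen_Ioi.mem_nhds (hsub hu))
      exact hdiff.hasDerivAt.log (hne u hu)
    have hsplit : ∫ u in x₀..v, 2 * (1 / 2 * deriv sq u - μ u) / sq u =
        Real.log (sq v) - Real.log (sq x₀) - ∫ u in x₀..v, 2 * μ u / sq u := by
      rw [← hlog, ← intervalIntegral.integral_sub hlogDeriv hdrift]
      congr 1
      ext u
      ring
    rw [hsV, hsU, hsplit, neg_sub, sub_sub_eq_add_sub, Real.exp_sub, Real.exp_add,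
      Real.exp_log (hsqpos x₀ hx₀), Real.exp_log (hsqpos v hv), Real.exp_neg]
    field_simp
  have hv₀ : sq v ≠ 0 := (hsqpos v hv).ne'
  have hx₀' : sq x₀ ≠ 0 := (hsqpos x₀ hx₀).ne'
  have hU : sU v ≠ 0 := by
    rw [hsU]
    exact Real.exp_ne_zero _
  refine ⟨hsV', ?_, ?_⟩
  · rw [hmV, hsV']
    field_simp
  · rw [hmU, hsV']
    field_simp
end

section
/- Let σ² : (0,∞) → (0,∞) be continuously differentiable and μ : (0,∞) → ℝ continuous, fix x₀ > 0, and let s_U, m_U, s_V, m_V be as above, with S_U(y) := ∫_{x₀}^y s_U(u) du and S_V(y) := ∫_{x₀}^y s_V(u) du. Then for all 0 < l < x < ∞: ∫_l^x ( S_U(y) - S_U(l) ) m_U(y) dy = ∫_l^x ( S_V(x) - S_V(u) ) m_V(u) du; that is, Feller's accessibility test I_U(l) for U equals Feller's entrance test J_V(l) for its Siegmund dual V. -/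
open Set

/-- The fundamental theorem of calculus on the half line `(0, ∞)`. -/
lemma hasDerivAt_integral_of_continuousOn_Ioi {f : ℝ → ℝ} (hf : ContinuousOn f (Ioi 0))
    {c y : ℝ} (hc : 0 < c) (hy : 0 < y) :
    HasDerivAt (fun z => ∫ u in c..z, f u) (f y) y := by
  have hsub : uIcc c y ⊆ Ioi 0 := fun z hz => (lt_min hc hy).trans_le hz.1
  exact intervalIntegral.integral_hasDerivAt_right (hf.mono hsub).intervalIntegrable
    (hf.stronglyMeasurableAtFilter isOpen_Ioi y hy) (hf.continuousAt (Ioi_mem_nhds hy))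

/-- The scale density of the Siegmund dual is `σ²(x₀) / (σ² s_U)`. -/
lemma siegmund_dual_scale_density {sq μ : ℝ → ℝ}
    (hpos : ∀ x : ℝ, 0 < x → 0 < sq x) (hC1 : ContDiffOn ℝ 1 sq (Ioi 0))
    (hμ : ContinuousOn μ (Ioi 0)) {c v : ℝ} (hc : 0 < c) (hv : 0 < v) :
    Real.exp (-(∫ u in c..v, 2 * (1 / 2 * deriv sq u - μ u) / sq u)) =
      sq c / (sq v * Real.exp (-(∫ u in c..v, 2 * μ u / sq u))) := by
  have hsub : uIcc c v ⊆ Ioi 0 := fun z hz => (lt_min hc hv).trans_le hz.1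
  have hne : ∀ z ∈ Ioi (0 : ℝ), sq z ≠ 0 := fun z hz => (hpos z hz).ne'
  have hdrift : ContinuousOn (fun u => 2 * μ u / sq u) (Ioi 0) :=
    (continuousOn_const.mul hμ).div hC1.continuousOn hne
  have hlogder : ContinuousOn (fun u => deriv sq u / sq u) (Ioi 0) :=
    (hC1.continuousOn_deriv_of_isOpen isOpen_Ioi le_rfl).div hC1.continuousOn hne
  have hlog : ∫ u in c..v, deriv sq u / sq u = Real.log (sq v) - Real.log (sq c) :=
    intervalIntegral.integral_eq_sub_of_hasDerivAt
      (fun z hz => (((hC1.differentiableOn one_ne_zero).differentiableAt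
        (Ioi_mem_nhds (hsub hz))).hasDerivAt).log (hne z (hsub hz)))
      (hlogder.mono hsub).intervalIntegrable
  have hsplit : ∫ u in c..v, 2 * (1 / 2 * deriv sq u - μ u) / sq u =
      (∫ u in c..v, deriv sq u / sq u) - ∫ u in c..v, 2 * μ u / sq u := by
    rw [← intervalIntegral.integral_sub (hlogder.mono hsub).intervalIntegrable
      (hdrift.mono hsub).intervalIntegrable]
    congr 1
    ext u
    ring
  rw [hsplit, hlog, neg_sub, sub_sub_eq_add_sub, Real.exp_sub, Real.exp_add,
    Real.exp_log (hpos v hv), Real.exp_log (hpos c hc), Real.exp_neg]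
  have := hne v hv
  field_simp

/-- Feller's accessibility test for `U` equals Feller's entrance test for its
Siegmund dual `V`: for all `0 < l < x`,
`∫_l^x (S_U(y) - S_U(l)) m_U(y) dy = ∫_l^x (S_V(x) - S_V(u)) m_V(u) du`. -/
theorem stmt_16 (sq μ : ℝ → ℝ)
    (hsqpos : ∀ x : ℝ, 0 < x → 0 < sq x)
    (hsqC1 : ContDiffOn ℝ 1 sq (Set.Ioi (0 : ℝ)))
    (hμ : ContinuousOn μ (Set.Ioi (0 : ℝ)))
    (x₀ : ℝ) (hx₀ : 0 < x₀)
    (sU sV mU mV SU SV : ℝ → ℝ)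
    (hsU : ∀ x : ℝ, sU x = Real.exp (-(∫ u in x₀..x, 2 * μ u / sq u)))
    (hsV : ∀ v : ℝ, sV v =
      Real.exp (-(∫ u in x₀..v, 2 * (1 / 2 * deriv sq u - μ u) / sq u)))
    (hmU : ∀ x : ℝ, mU x = 1 / (sq x * sU x))
    (hmV : ∀ x : ℝ, mV x = 1 / (sq x * sV x))
    (hSU : ∀ y : ℝ, SU y = ∫ u in x₀..y, sU u)
    (hSV : ∀ y : ℝ, SV y = ∫ u in x₀..y, sV u) :
    ∀ l x : ℝ, 0 < l → l < x →
      ∫ y in l..x, (SU y - SU l) * mU y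
        = ∫ u in l..x, (SV x - SV u) * mV u := by
  intro l x hl hlx
  have hsub : uIcc l x ⊆ Ioi 0 := fun z hz => (lt_min hl (hl.trans hlx)).trans_le hz.1
  have hsV_eq : ∀ v, 0 < v → sV v = sq x₀ / (sq v * sU v) := fun v hv => by
    rw [hsV, hsU, siegmund_dual_scale_density hsqpos hsqC1 hμ hx₀ hv]
  have hsU_pos : ∀ v, 0 < sU v := fun v => hsU v ▸ Real.exp_pos _
  have hsq₀ : sq x₀ ≠ 0 := (hsqpos x₀ hx₀).ne'
  have hdrift : ContinuousOn (fun u => 2 * μ u / sq u) (Ioi 0) :=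
    (continuousOn_const.mul hμ).div hsqC1.continuousOn fun z hz => (hsqpos z hz).ne'
  have hsU_cont : ContinuousOn sU (Ioi 0) := by
    rw [funext hsU]
    exact fun z hz => (hasDerivAt_integral_of_continuousOn_Ioi hdrift hx₀
      hz).continuousAt.neg.rexp.continuousWithinAt
  have hsV_cont : ContinuousOn sV (Ioi 0) :=
    (continuousOn_const.div (hsqC1.continuousOn.mul hsU_cont) fun z hz =>
      (mul_pos (hsqpos z hz) (hsU_pos z)).ne').congr hsV_eq
  have hSU_deriv : ∀ z ∈ uIcc l x, HasDerivAt (fun y => SU y - SU l) (sU z) z := fun z hz => by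
    rw [funext hSU]
    exact (hasDerivAt_integral_of_continuousOn_Ioi hsU_cont hx₀ (hsub hz)).sub_const _
  have hSV_deriv : ∀ z ∈ uIcc l x, HasDerivAt (fun y => SV y - SV x) (sV z) z := fun z hz => by
    rw [funext hSV]
    exact (hasDerivAt_integral_of_continuousOn_Ioi hsV_cont hx₀ (hsub hz)).sub_const _
  have hparts := intervalIntegral.integral_mul_deriv_eq_deriv_mul hSU_deriv hSV_deriv
    (hsU_cont.mono hsub).intervalIntegrable (hsV_cont.mono hsub).intervalIntegrable
  simp only [sub_self, mul_zero, zero_mul, zero_sub] at hparts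
  have hleft : ∫ y in l..x, (SU y - SU l) * mU y =
      (sq x₀)⁻¹ * ∫ y in l..x, (SU y - SU l) * sV y := by
    rw [← intervalIntegral.integral_const_mul]
    refine intervalIntegral.integral_congr fun z hz => ?_
    simp only [hmU, hsV_eq z (hsub hz)]
    field_simp
  have hright : ∫ u in l..x, (SV x - SV u) * mV u =
      (sq x₀)⁻¹ * -∫ u in l..x, sU u * (SV u - SV x) := by
    rw [← intervalIntegral.integral_neg, ← intervalIntegral.integral_const_mul]
    refine intervalIntegral.integral_congr fun z hz => ?_
    have hsqz := (hsqpos z (hsub hz)).ne'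
    have hsUz := (hsU_pos z).ne'
    simp only [hmV, hsV_eq z (hsub hz)]
    field_simp
    ring
  rw [hleft, hright, hparts]
end
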